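/- arXiv:1907.10563 — 2 statements merged into one kernel-verified Lean document; each statement's English description precedes it below -/
import Mathlib

section
/- Let ω ∈ D = D̂ ∩ Ď be a radial weight. Then there exists a constant C = C(ω) > 0 such that ‖f‖_{A^1_ω} ≤ C ( |f(0)| + ‖Re f‖_{L^1_ω} ) for every analytic function f on 𝔻. -/
/-!
Differentiating the Schwarz (Herglotz) formula expresses `f'` on the circle of radius `s` through
the boundary values of `Re f` on a larger circle of radius `u`, with a kernel whose modulus is
proportional to the Poisson kernel. Hence the means satisfy `M₁(s, f') ≤ 2 M₁(u, Re f) / (u - s)`.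

Integrating `f'` along radii and applying Tonelli's theorem, one obtains
`∫ M₁(r, f) ω(r) dr ≤ |f(0)| ω̂(0) + ∫ M₁(s, f') ω̂(s) ds`.
The two doubling conditions bound `ω̂(s)` by a multiple of the `ω`-mass of the radii `u` for which
`1 - u` is comparable to `1 - s` and at most `(1 - s) / 2`, so that `u - s ≥ 1 - u`. After replacing
`ω̂(s)` by this mass and inserting the bound on `M₁(s, f')`, a second application of Tonelli's
theorem finishes the proof: for fixed `u`, the admissible `s` form an interval of length comparable
to `1 - u`.

If `|f| ω` is not integrable, then `ApNorm 1 ω f` is the junk value `0` and the bound is trivial.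
-/

open MeasureTheory Set

/-- Tail integral `ω̂(r) = ∫_r^1 ω(s) ds`. -/
noncomputable def tailInt (ω : ℝ → ℝ) (r : ℝ) : ℝ := ∫ s in r..1, ω s

/-- A radial weight: nonnegative, integrable on `[0,1)`, with positive tails. -/
def RadialWeight (ω : ℝ → ℝ) : Prop :=
  (∀ r ∈ Set.Ico (0:ℝ) 1, 0 ≤ ω r) ∧ MeasureTheory.IntegrableOn ω (Set.Ico 0 1) ∧
    ∀ r ∈ Set.Ico (0:ℝ) 1, 0 < tailInt ω r

/-- The class `D̂` of upper doubling weights. -/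
def Dhat (ω : ℝ → ℝ) : Prop :=
  ∃ C : ℝ, 1 ≤ C ∧ ∀ r ∈ Set.Ico (0:ℝ) 1, tailInt ω r ≤ C * tailInt ω ((1 + r) / 2)

/-- The class `Ď`. -/
def Dcheck (ω : ℝ → ℝ) : Prop :=
  ∃ K C : ℝ, 1 < K ∧ 1 < C ∧ ∀ r ∈ Set.Ico (0:ℝ) 1,
    C * tailInt ω (1 - (1 - r) / K) ≤ tailInt ω r

/-- The associated weight `ω̃(r) = ω̂(r)/(1-r)`. -/
noncomputable def assocW (ω : ℝ → ℝ) (r : ℝ) : ℝ := tailInt ω r / (1 - r)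

/-- `‖f‖_{A^p_ω}^p = ∫_𝔻 |f|^p ω dA`, with `dA` the normalized area measure. -/
noncomputable def ApNorm (p : ℝ) (ω : ℝ → ℝ) (f : ℂ → ℂ) : ℝ :=
  Real.pi⁻¹ * ∫ z in Metric.ball (0:ℂ) 1, ‖f z‖ ^ p * ω ‖z‖

/-- `‖Re f‖_{L^p_ω}^p = ∫_𝔻 |Re f|^p ω dA`. -/
noncomputable def LpReNorm (p : ℝ) (ω : ℝ → ℝ) (f : ℂ → ℂ) : ℝ :=
  Real.pi⁻¹ * ∫ z in Metric.ball (0:ℂ) 1, |(f z).re| ^ p * ω ‖z‖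

/-- `M_p^p(s, Re f)`, the `p`-th power of the `p`-mean of `Re f` on the circle of radius `s`. -/
noncomputable def Mpp (p : ℝ) (f : ℂ → ℂ) (s : ℝ) : ℝ :=
  (2 * Real.pi)⁻¹ * ∫ θ in (0:ℝ)..(2 * Real.pi),
    |(f ((s : ℂ) * Complex.exp ((θ : ℂ) * Complex.I))).re| ^ p

/-- `sup_{0<s<r} M_p^p(s, Re f)`. -/
noncomputable def supMpp (p : ℝ) (f : ℂ → ℂ) (r : ℝ) : ℝ :=
  sSup ((fun s => Mpp p f s) '' Set.Ioo (0:ℝ) r)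

namespace WeightedBergman

open Metric Complex Filter Topology ENNReal
open InnerProductSpace (HarmonicContOnCl harmonicContOnCl_const)

/-! ### The derivative in terms of the real part -/

lemma deriv_eq_of_re_eventuallyEq {f g : ℂ → ℂ} {z : ℂ} (hf : DifferentiableAt ℂ f z)
    (hg : DifferentiableAt ℂ g z) (h : ∀ᶠ w in 𝓝 z, (f w).re = (g w).re) :
    deriv f z = deriv g z := by
  have hasFDerivAt_re {φ : ℂ → ℂ} (hφ : DifferentiableAt ℂ φ z) :
      HasFDerivAt (fun w => (φ w).re)
        (reCLM ∘L (ContinuousLinearMap.toSpanSingleton ℂ (deriv φ z)).restrictScalars ℝ) z :=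
    reCLM.hasFDerivAt.comp z (hφ.hasDerivAt.hasFDerivAt.restrictScalars ℝ)
  have hfg := (hasFDerivAt_re hf).unique ((hasFDerivAt_re hg).congr_of_eventuallyEq h)
  have re_mul_eq (v : ℂ) : (v * deriv f z).re = (v * deriv g z).re := by
    simpa using DFunLike.congr_fun hfg v
  exact Complex.ext (by simpa using re_mul_eq 1) (by simpa using re_mul_eq I)

lemma harmonicContOnCl_re {f : ℂ → ℂ} {U : Set ℂ} (hU : IsOpen U) (hf : DiffContOnCl ℂ f U) :
    HarmonicContOnCl (fun z => (f z).re) U where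
  harmonicOnNhd _ hz := (hf.differentiableOn.analyticAt (hU.mem_nhds hz)).harmonicAt_re
  continuousOn := continuous_re.comp_continuousOn hf.continuousOn

lemma deriv_eq_circleAverage_re {f : ℂ → ℂ} {R : ℝ} {w : ℂ} (hf : DiffContOnCl ℂ f (ball 0 R))
    (hw : w ∈ ball 0 R) :
    deriv f w = Real.circleAverage (fun ζ => 2 * ζ / (ζ - w) ^ 2 * (f ζ).re) 0 R := by
  have hR : 0 ≤ R := (pos_of_mem_ball hw).le
  have hre : HarmonicContOnCl (fun z => (f z).re) (ball 0 R) := harmonicContOnCl_re isOpen_ball hf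
  have hre_sphere : ContinuousOn (fun ζ => (f ζ).re) (sphere 0 R) :=
    hre.continuousOn_ball.mono sphere_subset_closedBall
  have herglotz := hasDerivAt_circleAverage_herglotzRieszKernel_smul
    ((Complex.continuous_ofReal.comp_continuousOn hre_sphere).circleIntegrable hR) hw
  refine (deriv_eq_of_re_eventuallyEq
    (hf.differentiableOn.differentiableAt (isOpen_ball.mem_nhds hw))
    herglotz.differentiableAt ?_).trans herglotz.deriv
  filter_upwards [isOpen_ball.mem_nhds hw] with v hv
  exact ((re_circleAverage_herglotzRieszKernel_smul (hre_sphere.circleIntegrable hR) hv).trans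
    (hre.circleAverage_re_herglotzRieszKernel_smul hv)).symm

lemma circleAverage_inv_norm_sub_sq {R : ℝ} {w : ℂ} (hw : w ∈ ball 0 R) :
    Real.circleAverage (fun ζ => (‖ζ - w‖ ^ 2)⁻¹) 0 R = (R ^ 2 - ‖w‖ ^ 2)⁻¹ := by
  have poisson : Real.circleAverage (poissonKernel 0 w • fun _ => (1 : ℝ)) 0 R = 1 :=
    harmonicContOnCl_const.circleAverage_poissonKernel_smul hw
  have kernel_eq : EqOn (poissonKernel 0 w • fun _ => (1 : ℝ))
      (fun ζ => (R ^ 2 - ‖w‖ ^ 2) • (‖ζ - w‖ ^ 2)⁻¹) (sphere 0 |R|) := fun ζ hζ => by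
    simp [poissonKernel_def, mem_sphere_zero_iff_norm.1 hζ, div_eq_mul_inv]
  rw [Real.circleAverage_congr_sphere kernel_eq, Real.circleAverage_fun_smul, smul_eq_mul]
    at poisson
  exact eq_inv_of_mul_eq_one_right poisson

/-- The uniform probability distribution on the interval of angles `(-π, π)`. The open interval is
the range of angles of `Complex.polarCoord`. -/
noncomputable def angleMeasure : Measure ℝ := ProbabilityTheory.cond volume (Ioo (-Real.pi) Real.pi)

lemma angleMeasure_eq_smul :
    angleMeasure = ENNReal.ofReal (2 * Real.pi)⁻¹ • volume.restrict (Ioo (-Real.pi) Real.pi) := by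
  rw [angleMeasure, ProbabilityTheory.cond, Real.volume_Ioo,
    ENNReal.ofReal_inv_of_pos Real.two_pi_pos]
  ring_nf

instance : IsProbabilityMeasure angleMeasure :=
  ProbabilityTheory.cond_isProbabilityMeasure_of_finite
    (by simp [Real.pi_pos]) (by simp)

lemma circleAverage_eq_integral_angleMeasure {E : Type*} [NormedAddCommGroup E] [NormedSpace ℝ E]
    (f : ℂ → E) (c : ℂ) (R : ℝ) :
    Real.circleAverage f c R = ∫ θ, f (circleMap c R θ) ∂angleMeasure := by
  rw [Real.circleAverage_eq_integral_add (-Real.pi),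
    intervalIntegral.integral_comp_add_right (fun θ => f (circleMap c R θ)), zero_add,
    show 2 * Real.pi + -Real.pi = Real.pi by ring,
    intervalIntegral.integral_of_le (by linarith [Real.pi_pos]), integral_Ioc_eq_integral_Ioo,
    angleMeasure_eq_smul, integral_smul_measure, ENNReal.toReal_ofReal (by positivity)]

lemma norm_circleMap_sub_circleMap_swap (R r θ φ : ℝ) :
    ‖circleMap 0 R φ - circleMap 0 r θ‖ = ‖circleMap 0 R θ - circleMap 0 r φ‖ := by
  have reflect (t α β : ℝ) :
      circleMap 0 t β = exp ((α + β : ℝ) * I) * starRingEnd ℂ (circleMap 0 t α) := by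
    rw [circleMap_zero, circleMap_zero, map_mul, conj_ofReal, ← exp_conj, map_mul, conj_ofReal,
      conj_I, mul_left_comm, ← Complex.exp_add]
    push_cast
    ring_nf
  rw [reflect R θ φ, reflect r φ θ, add_comm φ θ, ← mul_sub, ← map_sub, norm_mul,
    norm_exp_ofReal_mul_I, one_mul, norm_conj]

lemma circleMap_zero_mem_ball {r R : ℝ} (hr : 0 ≤ r) (hrR : r < R) (θ : ℝ) :
    circleMap 0 r θ ∈ ball 0 R := by
  simpa [abs_of_nonneg hr] using hrR

lemma lintegral_inv_norm_circleMap_sub_sq {r R : ℝ} (hr : 0 ≤ r) (hrR : r < R) (φ : ℝ) :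
    ∫⁻ θ, ENNReal.ofReal (‖circleMap 0 R φ - circleMap 0 r θ‖ ^ 2)⁻¹ ∂angleMeasure =
      ENNReal.ofReal (R ^ 2 - r ^ 2)⁻¹ := by
  have hφ : circleMap 0 r φ ∈ ball 0 R := circleMap_zero_mem_ball hr hrR φ
  have hne (θ : ℝ) : ‖circleMap 0 R θ - circleMap 0 r φ‖ ^ 2 ≠ 0 := by
    simpa [sub_eq_zero] using circleMap_ne_mem_ball hφ θ
  have hcont : Continuous fun θ => (‖circleMap 0 R θ - circleMap 0 r φ‖ ^ 2)⁻¹ :=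
    Continuous.inv₀ (by fun_prop) hne
  have hint : Integrable (fun θ => (‖circleMap 0 R θ - circleMap 0 r φ‖ ^ 2)⁻¹) angleMeasure := by
    rw [angleMeasure_eq_smul]
    exact ((hcont.integrableOn_Icc).mono_set Ioo_subset_Icc_self).integrable.smul_measure
      ENNReal.ofReal_ne_top
  simp_rw [norm_circleMap_sub_circleMap_swap R r _ φ]
  rw [← ofReal_integral_eq_lintegral_ofReal hint (ae_of_all _ fun θ => by positivity),
    ← circleAverage_eq_integral_angleMeasure (fun ζ => (‖ζ - circleMap 0 r φ‖ ^ 2)⁻¹),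
    circleAverage_inv_norm_sub_sq hφ, norm_circleMap_zero, sq_abs]

/-! ### Integral means on circles -/

section CircleMean

variable {E : Type*} [NormedAddCommGroup E]

/-- The integral mean `M₁(r, g) = (2π)⁻¹ ∫ ‖g(r e^{iθ})‖ dθ`. It is `ℝ≥0∞`-valued, so that
Tonelli's theorem applies to it without integrability assumptions. -/
noncomputable def circleMean (g : ℂ → E) (r : ℝ) : ℝ≥0∞ :=
  ∫⁻ θ, ‖g (circleMap 0 r θ)‖ₑ ∂angleMeasure

variable [NormedSpace ℂ E] [CompleteSpace E]

lemma measurable_enorm_deriv_circleMap (f : ℂ → E) :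
    Measurable fun p : ℝ × ℝ => ‖deriv f (circleMap 0 p.1 p.2)‖ₑ := by
  borelize E
  fun_prop

lemma measurable_circleMean_deriv (f : ℂ → E) : Measurable (circleMean (deriv f)) :=
  (measurable_enorm_deriv_circleMap f).lintegral_prod_right'

lemma enorm_circleMap_le {f : ℂ → E} {r R : ℝ} (hf : DifferentiableOn ℂ f (ball 0 R))
    (hr : 0 ≤ r) (hrR : r < R) (θ : ℝ) :
    ‖f (circleMap 0 r θ)‖ₑ ≤
      ‖f 0‖ₑ + ∫⁻ s in Icc 0 r, ‖deriv f (circleMap 0 s θ)‖ₑ := by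
  have mem_ball_of_mem {s : ℝ} (hs : s ∈ Icc 0 r) : circleMap 0 s θ ∈ ball 0 R :=
    circleMap_zero_mem_ball hs.1 (hs.2.trans_lt hrR) θ
  have hasDerivAt_radius (s : ℝ) : HasDerivAt (circleMap 0 · θ) (exp (θ * I)) s := by
    simpa [circleMap] using (hasDerivAt_id s).ofReal_comp.mul_const (exp (θ * I))
  have contDiffOn_radius : ContDiffOn ℝ 1 (f ∘ (circleMap 0 · θ)) (Icc 0 r) :=
    ((hf.contDiffOn isOpen_ball).restrict_scalars ℝ).comp
      (contDiff_const.add (ofRealCLM.contDiff.mul contDiff_const)).contDiffOn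
      fun _ => mem_ball_of_mem
  have enorm_deriv_radius (s : ℝ) (hs : s ∈ Icc 0 r) :
      ‖deriv (f ∘ (circleMap 0 · θ)) s‖ₑ = ‖deriv f (circleMap 0 s θ)‖ₑ := by
    have hfs := (hf.differentiableAt (isOpen_ball.mem_nhds (mem_ball_of_mem hs))).hasDerivAt
    rw [(hfs.scomp s (hasDerivAt_radius s)).deriv, enorm_smul, ← ofReal_norm (exp _),
      norm_exp_ofReal_mul_I, ENNReal.ofReal_one, one_mul]
  calc ‖f (circleMap 0 r θ)‖ₑ ≤ ‖f 0‖ₑ + ‖f (circleMap 0 r θ) - f (circleMap 0 0 θ)‖ₑ := by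
        simpa using enorm_add_le (f 0) (f (circleMap 0 r θ) - f 0)
    _ ≤ ‖f 0‖ₑ + ∫⁻ s in Icc 0 r, ‖deriv f (circleMap 0 s θ)‖ₑ := by
        rw [← setLIntegral_congr_fun measurableSet_Icc enorm_deriv_radius]
        gcongr
        exact enorm_sub_le_lintegral_deriv_of_contDiffOn_Icc contDiffOn_radius hr

lemma circleMean_le_add {f : ℂ → E} {r R : ℝ} (hf : DifferentiableOn ℂ f (ball 0 R))
    (hr : 0 ≤ r) (hrR : r < R) :
    circleMean f r ≤ ‖f 0‖ₑ + ∫⁻ s in Icc 0 r, circleMean (deriv f) s := by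
  calc circleMean f r
      ≤ ∫⁻ θ, (‖f 0‖ₑ + ∫⁻ s in Icc 0 r, ‖deriv f (circleMap 0 s θ)‖ₑ) ∂angleMeasure :=
        lintegral_mono fun θ => enorm_circleMap_le hf hr hrR θ
    _ = ‖f 0‖ₑ + ∫⁻ θ, (∫⁻ s in Icc 0 r, ‖deriv f (circleMap 0 s θ)‖ₑ) ∂angleMeasure := by
        rw [lintegral_add_left measurable_const, lintegral_const, measure_univ, mul_one]
    _ = ‖f 0‖ₑ + ∫⁻ s in Icc 0 r, circleMean (deriv f) s := by
        rw [lintegral_lintegral_swap (f := fun θ s => ‖deriv f (circleMap 0 s θ)‖ₑ)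
          ((measurable_enorm_deriv_circleMap f).comp measurable_swap).aemeasurable]
        rfl

end CircleMean

lemma enorm_deriv_le_lintegral {f : ℂ → ℂ} {R : ℝ} {w : ℂ} (hf : DiffContOnCl ℂ f (ball 0 R))
    (hw : w ∈ ball 0 R) :
    ‖deriv f w‖ₑ ≤ ∫⁻ φ, ENNReal.ofReal (2 * R) * (ENNReal.ofReal (‖circleMap 0 R φ - w‖ ^ 2)⁻¹ *
      ‖(f (circleMap 0 R φ)).re‖ₑ) ∂angleMeasure := by
  rw [deriv_eq_circleAverage_re hf hw, circleAverage_eq_integral_angleMeasure]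
  refine (enorm_integral_le_lintegral_enorm _).trans_eq (lintegral_congr fun φ => ?_)
  rw [← ofReal_norm, ← ofReal_norm, ← ENNReal.ofReal_mul (by positivity),
    ← ENNReal.ofReal_mul (by linarith [pos_of_mem_ball hw])]
  simp [abs_of_pos (pos_of_mem_ball hw), div_eq_mul_inv, mul_assoc]

lemma circleMean_deriv_le {f : ℂ → ℂ} {r R : ℝ} (hf : DiffContOnCl ℂ f (ball 0 R))
    (hr : 0 ≤ r) (hrR : r < R) :
    circleMean (deriv f) r ≤
      ENNReal.ofReal (2 * R * (R ^ 2 - r ^ 2)⁻¹) * circleMean (fun z => (f z).re) R := by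
  have hre : Measurable fun φ => ‖(f (circleMap 0 R φ)).re‖ₑ := by
    refine (Continuous.enorm ?_).measurable
    exact continuous_re.comp (hf.continuousOn_ball.comp_continuous (by fun_prop)
      fun φ => circleMap_mem_closedBall 0 (hr.trans hrR.le) φ)
  calc circleMean (deriv f) r
      ≤ ∫⁻ θ, ∫⁻ φ, ENNReal.ofReal (2 * R) *
          (ENNReal.ofReal (‖circleMap 0 R φ - circleMap 0 r θ‖ ^ 2)⁻¹ *
            ‖(f (circleMap 0 R φ)).re‖ₑ) ∂angleMeasure ∂angleMeasure :=
        lintegral_mono fun θ => enorm_deriv_le_lintegral hf (circleMap_zero_mem_ball hr hrR θ)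
    _ = ∫⁻ φ, ENNReal.ofReal (2 * R) * ((∫⁻ θ,
          ENNReal.ofReal (‖circleMap 0 R φ - circleMap 0 r θ‖ ^ 2)⁻¹ ∂angleMeasure) *
            ‖(f (circleMap 0 R φ)).re‖ₑ) ∂angleMeasure := by
        rw [lintegral_lintegral_swap ((Measurable.ennreal_ofReal (by fun_prop)).mul
          (hre.comp measurable_snd) |>.const_mul _).aemeasurable]
        refine lintegral_congr fun φ => ?_
        rw [lintegral_const_mul _ (by fun_prop), lintegral_mul_const _ (by fun_prop)]
    _ = ENNReal.ofReal (2 * R * (R ^ 2 - r ^ 2)⁻¹) * circleMean (fun z => (f z).re) R := by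
        simp_rw [lintegral_inv_norm_circleMap_sub_sq hr hrR, ← mul_assoc,
          ← ENNReal.ofReal_mul (show 0 ≤ 2 * R by linarith)]
        exact lintegral_const_mul _ hre

/-! ### Averaging over the outer shell -/

lemma lintegral_mul_measure_section {α β : Type*} [MeasurableSpace α] [MeasurableSpace β]
    {μ : Measure α} {ν : Measure β} [SFinite μ] [SFinite ν] {S : Set (α × β)}
    (hS : MeasurableSet S) {B : α → ℝ≥0∞} (hB : Measurable B) :
    ∫⁻ s, B s * ν {u | (s, u) ∈ S} ∂μ = ∫⁻ u, ∫⁻ s in {s | (s, u) ∈ S}, B s ∂μ ∂ν := by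
  have hH : Measurable (S.indicator fun p => B p.1) := (hB.comp measurable_fst).indicator hS
  calc ∫⁻ s, B s * ν {u | (s, u) ∈ S} ∂μ
      = ∫⁻ s, ∫⁻ u, S.indicator (fun p => B p.1) (s, u) ∂ν ∂μ :=
        lintegral_congr fun s => (lintegral_indicator_const (measurable_prodMk_left hS) (B s)).symm
    _ = ∫⁻ u, ∫⁻ s, S.indicator (fun p => B p.1) (s, u) ∂μ ∂ν :=
        lintegral_lintegral_swap (f := fun s u => S.indicator (fun p => B p.1) (s, u))
          hH.aemeasurable
    _ = ∫⁻ u, ∫⁻ s in {s | (s, u) ∈ S}, B s ∂μ ∂ν :=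
        lintegral_congr fun _ => lintegral_indicator (measurable_prodMk_right hS) B

lemma lintegral_circleMean_le {E : Type*} [NormedAddCommGroup E] [NormedSpace ℂ E]
    [CompleteSpace E] {f : ℂ → E} {R : ℝ} {ν : Measure ℝ} [SFinite ν]
    (hf : DifferentiableOn ℂ f (ball 0 R)) (hν : ∀ᵐ r ∂ν, r ∈ Ioo 0 R) :
    ∫⁻ r, circleMean f r ∂ν ≤
      ‖f 0‖ₑ * ν univ + ∫⁻ s in Ico 0 R, circleMean (deriv f) s * ν (Ici s) := by
  have section_eq {r : ℝ} (hr : r < R) : Icc 0 r = Iic r ∩ Ico 0 R := by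
    ext s
    simp only [mem_Icc, mem_inter_iff, mem_Iic, mem_Ico]
    exact ⟨fun h => ⟨h.2, h.1, h.2.trans_lt hr⟩, fun h => ⟨h.2.1, h.1⟩⟩
  calc ∫⁻ r, circleMean f r ∂ν
      ≤ ∫⁻ r, (‖f 0‖ₑ + ∫⁻ s in Iic r, circleMean (deriv f) s ∂volume.restrict (Ico 0 R)) ∂ν := by
        refine lintegral_mono_ae ?_
        filter_upwards [hν] with r hr
        rw [Measure.restrict_restrict measurableSet_Iic, ← section_eq hr.2]
        exact circleMean_le_add hf hr.1.le hr.2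
    _ = ‖f 0‖ₑ * ν univ +
          ∫⁻ r, (∫⁻ s in Iic r, circleMean (deriv f) s ∂volume.restrict (Ico 0 R)) ∂ν := by
        rw [lintegral_add_left measurable_const, lintegral_const]
    _ = ‖f 0‖ₑ * ν univ + ∫⁻ s in Ico 0 R, circleMean (deriv f) s * ν (Ici s) := by
        congr 1
        exact (lintegral_mul_measure_section (S := {p : ℝ × ℝ | p.1 ≤ p.2})
          (measurableSet_le measurable_fst measurable_snd) (measurable_circleMean_deriv f)).symm

/-- The radii `u` with `(1 - s) / (2 K) < 1 - u ≤ (1 - s) / 2`. For a weight in `D̂ ∩ Ď` this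
shell carries a fixed proportion of the mass beyond `s`, and it keeps away from `s`. -/
def outerShell (K s : ℝ) : Set ℝ := Ico ((1 + s) / 2) (1 - (1 - s) / (2 * K))

lemma mem_outerShell_iff {K s u : ℝ} (hK : 0 < K) :
    u ∈ outerShell K s ↔ s ∈ Ioc (1 - 2 * K * (1 - u)) (2 * u - 1) := by
  rw [outerShell, mem_Ico, mem_Ioc, lt_sub_comm, div_lt_iff₀ (by positivity)]
  constructor <;> rintro ⟨_, _⟩ <;> constructor <;> linarith

lemma volume_setOf_mem_outerShell {K u : ℝ} (hK : 0 < K) :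
    volume {s | u ∈ outerShell K s} = ENNReal.ofReal (2 * (K - 1) * (1 - u)) := by
  simp_rw [mem_outerShell_iff hK, ofPred_mem_eq, Real.volume_Ioc]
  congr 1
  ring

lemma inv_sub_le_of_mem_outerShell {K s u : ℝ} (hs : 0 ≤ s) (hu : u ∈ outerShell K s)
    (hu1 : u < 1) : (u - s)⁻¹ ≤ 2 * u * (1 - u)⁻¹ := by
  have hus : (1 + s) / 2 ≤ u := hu.1
  calc (u - s)⁻¹ ≤ (1 - u)⁻¹ := inv_anti₀ (by linarith) (by linarith)
    _ ≤ 2 * u * (1 - u)⁻¹ := le_mul_of_one_le_left (inv_nonneg.2 (by linarith)) (by linarith)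

section ShellEstimate

variable {K : ℝ} {B N : ℝ → ℝ≥0∞}

lemma setLIntegral_mem_outerShell_le {u : ℝ} (hK : 1 < K)
    (hBN : ∀ s ∈ Ico 0 u, B s ≤ ENNReal.ofReal (u - s)⁻¹ * N u) (hu : u ∈ Ioo 0 1) :
    ∫⁻ s in {s | u ∈ outerShell K s}, B s ∂volume.restrict (Ico 0 1) ≤
      ENNReal.ofReal (4 * (K - 1)) * (ENNReal.ofReal u * N u) := by
  have hmeas : MeasurableSet {s | u ∈ outerShell K s} := by
    simp_rw [mem_outerShell_iff (zero_lt_one.trans hK)]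
    exact measurableSet_Ioc
  have hB (s : ℝ) (hs : s ∈ {s | u ∈ outerShell K s} ∩ Ico 0 1) :
      B s ≤ ENNReal.ofReal (2 * u * (1 - u)⁻¹) * N u := by
    obtain ⟨hsu, hs0, hs1⟩ := hs
    have : s < u := by linarith [hsu.1]
    grw [hBN s ⟨hs0, this⟩, inv_sub_le_of_mem_outerShell hs0 hsu hu.2]
  calc ∫⁻ s in {s | u ∈ outerShell K s}, B s ∂volume.restrict (Ico 0 1)
      ≤ ∫⁻ _ in {s | u ∈ outerShell K s} ∩ Ico 0 1,
          ENNReal.ofReal (2 * u * (1 - u)⁻¹) * N u := by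
        rw [Measure.restrict_restrict hmeas]
        exact setLIntegral_mono' (hmeas.inter measurableSet_Ico) hB
    _ ≤ ENNReal.ofReal (2 * u * (1 - u)⁻¹) * N u * ENNReal.ofReal (2 * (K - 1) * (1 - u)) := by
        rw [setLIntegral_const, ← volume_setOf_mem_outerShell (zero_lt_one.trans hK)]
        gcongr
        exact inter_subset_left
    _ = ENNReal.ofReal (4 * (K - 1)) * (ENNReal.ofReal u * N u) := by
        have hu1 : 0 < 1 - u := sub_pos.2 hu.2
        rw [mul_right_comm, ← mul_assoc, ← ENNReal.ofReal_mul (by nlinarith [hu.1, inv_pos.2 hu1]),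
          ← ENNReal.ofReal_mul (by linarith)]
        congr 2
        field_simp
        ring

lemma lintegral_mul_measure_Ici_le {ν : Measure ℝ} [SFinite ν] {c : NNReal} (hK : 1 < K)
    (hB : Measurable B)
    (hBN : ∀ u < 1, ∀ s ∈ Ico 0 u, B s ≤ ENNReal.ofReal (u - s)⁻¹ * N u)
    (hν : ∀ᵐ u ∂ν, u ∈ Ioo 0 1) (hshell : ∀ s ∈ Ico 0 1, ν (Ici s) ≤ c * ν (outerShell K s)) :
    ∫⁻ s in Ico 0 1, B s * ν (Ici s) ≤
      c * (ENNReal.ofReal (4 * (K - 1)) * ∫⁻ u, ENNReal.ofReal u * N u ∂ν) := by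
  have hS : MeasurableSet {p : ℝ × ℝ | p.2 ∈ outerShell K p.1} :=
    (measurableSet_le (by fun_prop) measurable_snd).inter
      (measurableSet_lt measurable_snd (by fun_prop))
  calc ∫⁻ s in Ico 0 1, B s * ν (Ici s)
      ≤ ∫⁻ s in Ico 0 1, c * (B s * ν (outerShell K s)) := by
        refine setLIntegral_mono' measurableSet_Ico fun s hs => ?_
        grw [hshell s hs, mul_left_comm]
    _ = c * ∫⁻ u, (∫⁻ s in {s | u ∈ outerShell K s}, B s ∂volume.restrict (Ico 0 1)) ∂ν := by
        rw [lintegral_const_mul' _ _ coe_ne_top]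
        exact congrArg _ (lintegral_mul_measure_section hS hB)
    _ ≤ c * ∫⁻ u, ENNReal.ofReal (4 * (K - 1)) * (ENNReal.ofReal u * N u) ∂ν := by
        gcongr (c : ℝ≥0∞) * ?_
        refine lintegral_mono_ae ?_
        filter_upwards [hν] with u hu
        exact setLIntegral_mem_outerShell_le hK (hBN u hu.2) hu
    _ = _ := by rw [lintegral_const_mul' _ _ ENNReal.ofReal_ne_top]

end ShellEstimate

lemma lintegral_ofReal_mul_circleMean_le {f : ℂ → ℂ} {K : ℝ} {c : NNReal} {ν : Measure ℝ}
    [SFinite ν] (hf : DifferentiableOn ℂ f (ball 0 1)) (hK : 1 < K)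
    (hν : ∀ᵐ r ∂ν, r ∈ Ioo 0 1) (hshell : ∀ s ∈ Ico 0 1, ν (Ici s) ≤ c * ν (outerShell K s)) :
    ∫⁻ r, ENNReal.ofReal r * circleMean f r ∂ν ≤ ‖f 0‖ₑ * ν univ +
      c * (ENNReal.ofReal (8 * (K - 1)) *
        ∫⁻ r, ENNReal.ofReal r * circleMean (fun z => (f z).re) r ∂ν) := by
  have deriv_le (R : ℝ) (hR : R < 1) (s : ℝ) (hs : s ∈ Ico 0 R) : circleMean (deriv f) s ≤
      ENNReal.ofReal (R - s)⁻¹ * (2 * circleMean (fun z => (f z).re) R) := by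
    have hRs : 0 < R - s := sub_pos.2 hs.2
    have hfR : DiffContOnCl ℂ f (ball 0 R) :=
      (hf.mono (closedBall_subset_ball hR)).diffContOnCl_ball subset_rfl
    have kernel_le : 2 * R * (R ^ 2 - s ^ 2)⁻¹ ≤ (R - s)⁻¹ * 2 := by
      rw [sq_sub_sq, mul_inv, ← mul_assoc, mul_comm]
      gcongr
      rw [← div_eq_mul_inv, div_le_iff₀ (by linarith [hs.1])]
      linarith [hs.1]
    grw [circleMean_deriv_le hfR hs.1 hs.2, kernel_le, ENNReal.ofReal_mul (by positivity),
      ENNReal.ofReal_ofNat, mul_assoc]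
  calc ∫⁻ r, ENNReal.ofReal r * circleMean f r ∂ν ≤ ∫⁻ r, circleMean f r ∂ν := by
        refine lintegral_mono_ae ?_
        filter_upwards [hν] with r hr
        exact mul_le_of_le_one_left' (ENNReal.ofReal_le_one.2 hr.2.le)
    _ ≤ ‖f 0‖ₑ * ν univ + ∫⁻ s in Ico 0 1, circleMean (deriv f) s * ν (Ici s) :=
        lintegral_circleMean_le hf hν
    _ ≤ ‖f 0‖ₑ * ν univ + c * (ENNReal.ofReal (4 * (K - 1)) *
          ∫⁻ r, ENNReal.ofReal r * (2 * circleMean (fun z => (f z).re) r) ∂ν) := by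
        gcongr
        exact lintegral_mul_measure_Ici_le hK (measurable_circleMean_deriv f) deriv_le hν hshell
    _ = _ := by
        simp_rw [mul_left_comm _ (2 : ℝ≥0∞)]
        rw [lintegral_const_mul' _ _ (by simp), ← mul_assoc (ENNReal.ofReal _),
          ← ENNReal.ofReal_ofNat 2, ← ENNReal.ofReal_mul (by linarith)]
        ring_nf

/-! ### Polar coordinates and radial weights -/

lemma setLIntegral_Ioo_neg_pi_pi (F : ℝ → ℝ≥0∞) :
    ∫⁻ θ in Ioo (-Real.pi) Real.pi, F θ =
      ENNReal.ofReal (2 * Real.pi) * ∫⁻ θ, F θ ∂angleMeasure := by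
  rw [angleMeasure_eq_smul, lintegral_smul_measure, smul_eq_mul, ← mul_assoc,
    ← ENNReal.ofReal_mul Real.two_pi_pos.le, mul_inv_cancel₀ Real.two_pi_pos.ne',
    ENNReal.ofReal_one, one_mul]

lemma lintegral_ball_eq_lintegral_circleMap (F : ℂ → ℝ≥0∞) (R : ℝ) :
    ∫⁻ z in ball 0 R, F z = ∫⁻ p in Ioo 0 R ×ˢ Ioo (-Real.pi) Real.pi,
      ENNReal.ofReal p.1 * F (circleMap 0 p.1 p.2) := by
  have inter_target : (Iio R ×ˢ univ) ∩ (Ioi 0 ×ˢ Ioo (-Real.pi) Real.pi) =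
      Ioo 0 R ×ˢ Ioo (-Real.pi) Real.pi := by
    rw [prod_inter_prod, univ_inter, inter_comm, Ioi_inter_Iio]
  rw [← lintegral_indicator measurableSet_ball, ← Complex.lintegral_comp_polarCoord_symm,
    polarCoord_target, ← inter_target,
    ← setLIntegral_indicator (measurableSet_Iio.prod MeasurableSet.univ)]
  refine setLIntegral_congr_fun (measurableSet_Ioi.prod measurableSet_Ioo) fun p hp => ?_
  have hp0 : 0 < p.1 := hp.1
  have polarCoord_symm_eq : Complex.polarCoord.symm p = circleMap 0 p.1 p.2 := by
    rw [Complex.polarCoord_symm_apply, circleMap_zero, exp_mul_I, ofReal_cos, ofReal_sin]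
  by_cases hpR : p.1 < R <;>
    simp [indicator, polarCoord_symm_eq, abs_of_pos hp0, hpR, -Complex.polarCoord_symm_apply]

lemma lintegral_ball_enorm_mul {E : Type*} [NormedAddCommGroup E] {g : ℂ → E} {W : ℝ → ℝ≥0∞}
    {R : ℝ} (hg : ContinuousOn g (ball 0 R)) (hW : AEMeasurable W (volume.restrict (Ioo 0 R))) :
    ∫⁻ z in ball 0 R, ‖g z‖ₑ * W ‖z‖ = ENNReal.ofReal (2 * Real.pi) *
      ∫⁻ r in Ioo 0 R, W r * (ENNReal.ofReal r * circleMean g r) := by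
  have hmaps : MapsTo (fun p : ℝ × ℝ => circleMap 0 p.1 p.2)
      (Ioo 0 R ×ˢ Ioo (-Real.pi) Real.pi) (ball 0 R) := fun p hp =>
    circleMap_zero_mem_ball hp.1.1.le hp.1.2 p.2
  have hmeas : AEMeasurable (fun p : ℝ × ℝ => W p.1 * (ENNReal.ofReal p.1 *
      ‖g (circleMap 0 p.1 p.2)‖ₑ)) ((volume.restrict (Ioo 0 R)).prod
        (volume.restrict (Ioo (-Real.pi) Real.pi))) := by
    refine hW.comp_fst.mul ((ENNReal.measurable_ofReal.comp measurable_fst).aemeasurable.mul ?_)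
    rw [Measure.prod_restrict]
    exact (hg.comp (by fun_prop) hmaps).enorm.aemeasurable
      (measurableSet_Ioo.prod measurableSet_Ioo)
  calc ∫⁻ z in ball 0 R, ‖g z‖ₑ * W ‖z‖
      = ∫⁻ p in Ioo 0 R ×ˢ Ioo (-Real.pi) Real.pi,
          W p.1 * (ENNReal.ofReal p.1 * ‖g (circleMap 0 p.1 p.2)‖ₑ) := by
        rw [lintegral_ball_eq_lintegral_circleMap]
        refine setLIntegral_congr_fun (measurableSet_Ioo.prod measurableSet_Ioo) fun p hp => ?_
        rw [norm_circleMap_zero, abs_of_pos hp.1.1]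
        ring
    _ = ∫⁻ r in Ioo 0 R, ∫⁻ θ in Ioo (-Real.pi) Real.pi,
          W r * (ENNReal.ofReal r * ‖g (circleMap 0 r θ)‖ₑ) := by
        rw [Measure.volume_eq_prod, ← Measure.prod_restrict, lintegral_prod _ hmeas]
    _ = ∫⁻ r in Ioo 0 R, ENNReal.ofReal (2 * Real.pi) *
          (W r * (ENNReal.ofReal r * circleMean g r)) := by
        refine setLIntegral_congr_fun measurableSet_Ioo fun r hr => ?_
        have hr_meas : Measurable fun θ => ‖g (circleMap 0 r θ)‖ₑ := by
          refine Continuous.measurable ?_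
          exact (hg.comp_continuous (by fun_prop) (circleMap_zero_mem_ball hr.1.le hr.2)).enorm
        rw [setLIntegral_Ioo_neg_pi_pi, lintegral_const_mul _ (hr_meas.const_mul _),
          lintegral_const_mul _ hr_meas, circleMean]
    _ = _ := lintegral_const_mul' _ _ ENNReal.ofReal_ne_top

/-- The measure `ω(r) dr` on `[0, 1)`. -/
noncomputable def radialMeasure (ω : ℝ → ℝ) : Measure ℝ :=
  (volume.restrict (Ico 0 1)).withDensity fun r => ENNReal.ofReal (ω r)

section RadialMeasure

variable {ω : ℝ → ℝ}

instance : SFinite (radialMeasure ω) := by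
  unfold radialMeasure
  infer_instance

lemma ae_radialMeasure_mem_Ioo : ∀ᵐ r ∂radialMeasure ω, r ∈ Ioo 0 1 := by
  refine (withDensity_absolutelyContinuous _ _).ae_le ?_
  rw [← restrict_Ioo_eq_restrict_Ico]
  exact ae_restrict_mem measurableSet_Ioo

lemma radialMeasure_apply_of_inter_eq (hω : RadialWeight ω) {A : Set ℝ} {a b : ℝ}
    (hA : MeasurableSet A) (hab : a ≤ b) (hAab : A ∩ Ico 0 1 = Ico a b) :
    radialMeasure ω A = ENNReal.ofReal (∫ r in a..b, ω r) := by
  have hsub : Ico a b ⊆ Ico 0 1 := hAab ▸ inter_subset_right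
  rw [radialMeasure, withDensity_apply _ hA, Measure.restrict_restrict hA, hAab,
    intervalIntegral.integral_of_le hab, ← integral_Ico_eq_integral_Ioc,
    ofReal_integral_eq_lintegral_ofReal (hω.2.1.mono_set hsub)]
  filter_upwards [ae_restrict_mem measurableSet_Ico] with r hr
  exact hω.1 r (hsub hr)

lemma radialMeasure_Ici (hω : RadialWeight ω) {s : ℝ} (hs : s ∈ Ico 0 1) :
    radialMeasure ω (Ici s) = ENNReal.ofReal (tailInt ω s) := by
  refine radialMeasure_apply_of_inter_eq hω measurableSet_Ici hs.2.le ?_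
  rw [← Ici_inter_Iio, ← Ici_inter_Iio, ← inter_assoc, Ici_inter_Ici, sup_eq_left.2 hs.1]

lemma radialMeasure_univ (hω : RadialWeight ω) :
    radialMeasure ω univ = ENNReal.ofReal (tailInt ω 0) :=
  radialMeasure_apply_of_inter_eq hω .univ zero_le_one (univ_inter _)

lemma radialMeasure_Ico (hω : RadialWeight ω) {a b : ℝ} (ha : 0 ≤ a) (hab : a ≤ b) (hb : b ≤ 1) :
    radialMeasure ω (Ico a b) = ENNReal.ofReal (tailInt ω a - tailInt ω b) := by
  have intervalIntegrable {x y : ℝ} (hx : 0 ≤ x) (hxy : x ≤ y) (hy : y ≤ 1) :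
      IntervalIntegrable ω volume x y :=
    (intervalIntegrable_iff_integrableOn_Ico_of_le hxy).2
      (hω.2.1.mono_set (Ico_subset_Ico hx hy))
  rw [radialMeasure_apply_of_inter_eq hω measurableSet_Ico hab
    (inter_eq_left.2 (Ico_subset_Ico ha hb)), tailInt, tailInt,
    ← intervalIntegral.integral_add_adjacent_intervals (intervalIntegrable ha hab hb)
      (intervalIntegrable (ha.trans hab) hb le_rfl), add_sub_cancel_right]

lemma exists_radialMeasure_Ici_le (hω : RadialWeight ω) (h1 : Dhat ω) (h2 : Dcheck ω) :
    ∃ (c : NNReal) (K : ℝ), 1 < K ∧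
      ∀ s ∈ Ico 0 1, radialMeasure ω (Ici s) ≤ c * radialMeasure ω (outerShell K s) := by
  obtain ⟨C₁, hC₁, hdouble⟩ := h1
  obtain ⟨K, C₂, hK, hC₂, hreverse⟩ := h2
  refine ⟨(C₁ * (C₂ / (C₂ - 1))).toNNReal, K, hK, fun s hs => ?_⟩
  have hs1 : 0 < (1 - s) / 2 := half_pos (sub_pos.2 hs.2)
  have ha : (1 + s) / 2 ∈ Ico 0 1 := ⟨by linarith [hs.1], by linarith⟩
  have outer_eq : 1 - (1 - (1 + s) / 2) / K = 1 - (1 - s) / (2 * K) := by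
    field_simp
    ring
  have hab : (1 + s) / 2 ≤ 1 - (1 - s) / (2 * K) := by
    rw [← div_div]
    linarith [div_le_self hs1.le hK.le]
  have hb : 1 - (1 - s) / (2 * K) ≤ 1 := by
    rw [← div_div]
    linarith [div_pos hs1 (zero_lt_one.trans hK)]
  have shell_mass : tailInt ω ((1 + s) / 2) ≤
      C₂ / (C₂ - 1) * (tailInt ω ((1 + s) / 2) - tailInt ω (1 - (1 - s) / (2 * K))) := by
    have hrev := outer_eq ▸ hreverse _ ha
    rw [div_mul_eq_mul_div, le_div_iff₀ (sub_pos.2 hC₂)]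
    linarith
  rw [radialMeasure_Ici hω hs, outerShell, radialMeasure_Ico hω ha.1 hab hb]
  change _ ≤ ENNReal.ofReal _ * _
  have hC : 0 ≤ C₁ * (C₂ / (C₂ - 1)) :=
    mul_nonneg (zero_le_one.trans hC₁) (div_nonneg (by linarith) (by linarith))
  rw [← ENNReal.ofReal_mul hC, mul_assoc]
  refine ENNReal.ofReal_le_ofReal ((hdouble s hs).trans ?_)
  gcongr

end RadialMeasure

lemma integrableOn_comp_norm_ball {E F : Type*} [NormedAddCommGroup E] [NormedSpace ℝ E]
    [FiniteDimensional ℝ E] [Nontrivial E] [MeasurableSpace E] [BorelSpace E]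
    [NormedAddCommGroup F] [NormedSpace ℝ F] (μ : Measure E) [μ.IsAddHaarMeasure] {W : ℝ → F}
    {R : ℝ} (hW : IntegrableOn W (Ioo 0 R)) : IntegrableOn (fun x => W ‖x‖) (ball (0 : E) R) μ := by
  rw [integrableOn_fun_norm_addHaar]
  refine hW.bdd_smul (C := R ^ (Module.finrank ℝ E - 1)) (by fun_prop) ?_
  filter_upwards [ae_restrict_mem measurableSet_Ioo] with r hr
  rw [norm_pow, Real.norm_of_nonneg hr.1.le]
  gcongr
  · exact hr.1.le
  · exact hr.2.le

section Norms

variable {ω : ℝ → ℝ}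

lemma ofReal_integral_norm_mul_eq {E : Type*} [NormedAddCommGroup E] {g : ℂ → E}
    (hω : RadialWeight ω) (hg : ContinuousOn g (ball 0 1))
    (hI : IntegrableOn (fun z => ‖g z‖ * ω ‖z‖) (ball 0 1)) :
    ENNReal.ofReal (Real.pi⁻¹ * ∫ z in ball 0 1, ‖g z‖ * ω ‖z‖) =
      2 * ∫⁻ r, ENNReal.ofReal r * circleMean g r ∂radialMeasure ω := by
  have hω_meas : AEMeasurable (fun r => ENNReal.ofReal (ω r)) (volume.restrict (Ioo 0 1)) :=
    (hω.2.1.mono_set Ioo_subset_Ico_self).aemeasurable.ennreal_ofReal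
  have hnonneg : ∀ᵐ z ∂volume.restrict (ball (0 : ℂ) 1), 0 ≤ ‖g z‖ * ω ‖z‖ := by
    filter_upwards [ae_restrict_mem measurableSet_ball] with z hz
    exact mul_nonneg (norm_nonneg _) (hω.1 _ ⟨norm_nonneg z, mem_ball_zero_iff.1 hz⟩)
  rw [ENNReal.ofReal_mul (by positivity), ofReal_integral_eq_lintegral_ofReal hI hnonneg]
  simp_rw [ENNReal.ofReal_mul (norm_nonneg _), ofReal_norm]
  rw [lintegral_ball_enorm_mul hg hω_meas, ← mul_assoc,
    ← ENNReal.ofReal_mul (by positivity), radialMeasure, ← restrict_Ioo_eq_restrict_Ico,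
    lintegral_withDensity_eq_lintegral_mul_non_measurable₀ _ hω_meas
      (ae_of_all _ fun _ => ENNReal.ofReal_lt_top)]
  congr 1
  rw [mul_left_comm, inv_mul_cancel₀ Real.pi_ne_zero, mul_one, ENNReal.ofReal_ofNat]

lemma integrableOn_abs_re_mul {f : ℂ → ℂ} (hω : IntegrableOn ω (Ioo 0 1))
    (hf : ContinuousOn f (ball 0 1)) (hI : IntegrableOn (fun z => ‖f z‖ * ω ‖z‖) (ball 0 1)) :
    IntegrableOn (fun z => |(f z).re| * ω ‖z‖) (ball 0 1) := by
  refine Integrable.mono hI (AEStronglyMeasurable.mul ?_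
    (integrableOn_comp_norm_ball volume hω).aestronglyMeasurable) (ae_of_all _ fun z => ?_)
  · exact (continuous_re.comp_continuousOn hf).abs.aestronglyMeasurable measurableSet_ball
  · simp only [norm_mul, Real.norm_eq_abs, abs_abs, abs_norm]
    gcongr
    exact abs_re_le_norm (f z)

lemma LpReNorm_nonneg (hω : ∀ r ∈ Ico 0 1, 0 ≤ ω r) (p : ℝ) (f : ℂ → ℂ) :
    0 ≤ LpReNorm p ω f := by
  refine mul_nonneg (by positivity) (setIntegral_nonneg measurableSet_ball fun z hz => ?_)
  exact mul_nonneg (by positivity) (hω _ ⟨norm_nonneg z, mem_ball_zero_iff.1 hz⟩)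

lemma ApNorm_one_le {f : ℂ → ℂ} {K : ℝ} {c : NNReal} (hω : RadialWeight ω)
    (hf : DifferentiableOn ℂ f (ball 0 1)) (hK : 1 < K)
    (hshell : ∀ s ∈ Ico 0 1, radialMeasure ω (Ici s) ≤ c * radialMeasure ω (outerShell K s)) :
    ApNorm 1 ω f ≤ 2 * tailInt ω 0 * ‖f 0‖ + c * (8 * (K - 1)) * LpReNorm 1 ω f := by
  have htail : 0 < tailInt ω 0 := hω.2.2 0 (by simp)
  have hRe := LpReNorm_nonneg hω.1 1 f
  have hcK : 0 ≤ c * (8 * (K - 1)) := mul_nonneg c.2 (by linarith)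
  have hrhs : 0 ≤ 2 * tailInt ω 0 * ‖f 0‖ + c * (8 * (K - 1)) * LpReNorm 1 ω f :=
    add_nonneg (by positivity) (mul_nonneg hcK hRe)
  by_cases hI : IntegrableOn (fun z => ‖f z‖ * ω ‖z‖) (ball 0 1)
  swap
  · simpa only [ApNorm, Real.rpow_one, integral_undef hI, mul_zero] using hrhs
  have norm_eq : ENNReal.ofReal (ApNorm 1 ω f) =
      2 * ∫⁻ r, ENNReal.ofReal r * circleMean f r ∂radialMeasure ω := by
    simpa only [ApNorm, Real.rpow_one] using ofReal_integral_norm_mul_eq hω hf.continuousOn hI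
  have re_norm_eq : ENNReal.ofReal (LpReNorm 1 ω f) =
      2 * ∫⁻ r, ENNReal.ofReal r * circleMean (fun z => (f z).re) r ∂radialMeasure ω := by
    have hReI := integrableOn_abs_re_mul (hω.2.1.mono_set Ioo_subset_Ico_self) hf.continuousOn hI
    have hRe_cont : ContinuousOn (fun z => (f z).re) (ball 0 1) :=
      continuous_re.comp_continuousOn hf.continuousOn
    simpa only [LpReNorm, Real.rpow_one, Real.norm_eq_abs] using
      ofReal_integral_norm_mul_eq hω hRe_cont hReI
  rw [← ENNReal.ofReal_le_ofReal_iff hrhs]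
  calc ENNReal.ofReal (ApNorm 1 ω f)
      ≤ 2 * (‖f 0‖ₑ * ENNReal.ofReal (tailInt ω 0) + c * (ENNReal.ofReal (8 * (K - 1)) *
          ∫⁻ r, ENNReal.ofReal r * circleMean (fun z => (f z).re) r ∂radialMeasure ω)) := by
        rw [norm_eq, ← radialMeasure_univ hω]
        gcongr
        exact lintegral_ofReal_mul_circleMean_le hf hK ae_radialMeasure_mem_Ioo hshell
    _ = 2 * ENNReal.ofReal (tailInt ω 0) * ‖f 0‖ₑ +
          c * ENNReal.ofReal (8 * (K - 1)) * ENNReal.ofReal (LpReNorm 1 ω f) := by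
        rw [re_norm_eq]
        ring
    _ = _ := by
        rw [ENNReal.ofReal_add (by positivity) (mul_nonneg hcK hRe),
          ENNReal.ofReal_mul (p := 2 * tailInt ω 0) (by positivity), ENNReal.ofReal_mul zero_le_two,
          ENNReal.ofReal_mul hcK, ENNReal.ofReal_mul (p := c) c.2, ENNReal.ofReal_ofNat,
          ofReal_norm, ENNReal.ofReal_coe_nnreal]

end Norms

end WeightedBergman

/-- If `ω ∈ D = D̂ ∩ Ď`, then there is `C = C(ω) > 0` with
`‖f‖_{A^1_ω} ≤ C (|f(0)| + ‖Re f‖_{L^1_ω})` for every analytic `f` on `𝔻`. -/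
theorem statement17 (ω : ℝ → ℝ) (hω : RadialWeight ω) (h1 : Dhat ω) (h2 : Dcheck ω) :
    ∃ C : ℝ, 0 < C ∧ ∀ f : ℂ → ℂ, DifferentiableOn ℂ f (Metric.ball (0:ℂ) 1) →
      ApNorm 1 ω f ≤ C * (‖f 0‖ + LpReNorm 1 ω f) := by
  obtain ⟨c, K, hK, hshell⟩ := WeightedBergman.exists_radialMeasure_Ici_le hω h1 h2
  have htail : 0 < tailInt ω 0 := hω.2.2 0 (by simp)
  have hcK : 0 ≤ c * (8 * (K - 1)) := mul_nonneg c.2 (by linarith)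
  refine ⟨2 * tailInt ω 0 + c * (8 * (K - 1)), by positivity, fun f hf => ?_⟩
  have hRe : 0 ≤ LpReNorm 1 ω f := WeightedBergman.LpReNorm_nonneg hω.1 1 f
  calc ApNorm 1 ω f ≤ 2 * tailInt ω 0 * ‖f 0‖ + c * (8 * (K - 1)) * LpReNorm 1 ω f :=
        WeightedBergman.ApNorm_one_le hω hf hK hshell
    _ ≤ (2 * tailInt ω 0 + c * (8 * (K - 1))) * (‖f 0‖ + LpReNorm 1 ω f) := by
        rw [mul_add]
        gcongr
        · exact le_add_of_nonneg_right hcK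
        · exact le_add_of_nonneg_left (by positivity)
end

section
/- Define φ : {n ∈ ℕ : n ≥ 2} → ℝ by φ(n) = n^{−3} if n is not of the form 2^{2^j} for some j ∈ ℕ, and φ(n) = (log₂ log₂ n)/n² + n^{−3} if n = 2^{2^j} for some j ∈ ℕ. Then: (a) 0 < φ(n) < 1/2 for all n ≥ 2 and Σ_{n=2}^∞ φ(n) < ∞; (b) limsup_{n→∞} ( Σ_{k=n+1}^∞ φ(k) ) / φ(n) = ∞; (c) there is a constant c > 0 such that Σ_{n=k}^∞ φ(n) ≤ c Σ_{n=k}^∞ Σ_{j=n+1}^∞ φ(j) for all k ≥ 4; and (d) there is a constant c' > 0 such that φ(k) ≤ c' Σ_{n=k+1}^∞ Σ_{j=n+1}^∞ φ(j) for all k ≥ 4. -/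
/-!
Summability, (c) and (d) follow from `φ(n) ≥ n⁻³` and the convergence of `∑ n φ(n)`, which splits
into `∑ n⁻²` and `∑ j / 2^{2^j}`. Writing `A` for the sum of `∑ n φ(n)`, the tail of `φ` starting at
`k` is at most `A / k`. Conversely, keeping only the first `m` terms of a tail starting at `m`, the
lower bound `n⁻³` for `φ` gives a lower bound of order `m⁻²` for its tails and then one of order
`m⁻¹` for its double tails. So a tail starting at `k` is at most a constant times a double tail
starting at any `m ≤ 2 k`, in particular at `k + 1` or `k + 2`.

For (b), take `n = 2^{2^j} - 1`, which is odd: then `φ(n) = n⁻³`, while the tail after `n` contains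
`φ(n + 1) ≥ j / (n + 1)²`, so that the ratio is at least `j / 4`.
-/

open Filter

/-- The sequence `φ(n) = n⁻³` for `n` not of the form `2^{2^j}`, and
`φ(n) = (log₂ log₂ n)/n² + n⁻³` for `n = 2^{2^j}`. -/
noncomputable def phiW (n : ℕ) : ℝ :=
  letI := Classical.propDecidable (∃ j : ℕ, n = 2 ^ 2 ^ j)
  if ∃ j : ℕ, n = 2 ^ 2 ^ j then
    Real.logb 2 (Real.logb 2 (n : ℝ)) / (n : ℝ) ^ 2 + 1 / (n : ℝ) ^ 3
  else 1 / (n : ℝ) ^ 3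

section SeriesTail

/-- The tail `∑_{j ≥ n} f(j)` of the series of `f`, as a function of the starting index `n`, so that
the double series `∑_{n ≥ m} ∑_{j ≥ n} f(j)` is `seriesTail (seriesTail f) m`. -/
noncomputable def seriesTail {E : Type*} [AddCommMonoid E] [TopologicalSpace E]
    (f : ℕ → E) (n : ℕ) : E :=
  ∑' j, f (n + j)

lemma le_seriesTail {f : ℕ → ℝ} (hf : Summable f) (hf₀ : ∀ n, 0 ≤ f n) (n : ℕ) :
    f n ≤ seriesTail f n :=
  (hf.comp_injective (add_right_injective n)).le_tsum 0 fun _ _ => hf₀ _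

/-- The first `m` terms of the tail are each at least `c / (2 * m) ^ (s + 1)`. -/
lemma div_pow_le_seriesTail {f : ℕ → ℝ} (hf : Summable f) {c : ℝ} (hc : 0 ≤ c) {s m : ℕ}
    (hm : 0 < m) (h : ∀ n, m ≤ n → c / (n : ℝ) ^ (s + 1) ≤ f n) :
    c / 2 ^ (s + 1) / (m : ℝ) ^ s ≤ seriesTail f m := by
  have hterm : ∀ j ∈ Finset.range m, c / (2 * (m : ℝ)) ^ (s + 1) ≤ f (m + j) := fun j hj => by
    have : (0 : ℝ) < (m + j : ℕ) := by exact_mod_cast Nat.add_pos_left hm j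
    have hle : ((m + j : ℕ) : ℝ) ≤ 2 * m := by
      have := Finset.mem_range.1 hj
      exact_mod_cast (by lia : m + j ≤ 2 * m)
    refine le_trans ?_ (h (m + j) (Nat.le_add_right m j))
    gcongr
  have hnonneg : ∀ j, 0 ≤ f (m + j) := fun j =>
    le_trans (by positivity) (h (m + j) (Nat.le_add_right m j))
  calc c / 2 ^ (s + 1) / (m : ℝ) ^ s
      = (Finset.range m).card • (c / (2 * (m : ℝ)) ^ (s + 1)) := by
        have : (0 : ℝ) < m := by exact_mod_cast hm
        rw [Finset.card_range, nsmul_eq_mul]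
        field_simp
        ring
    _ ≤ ∑ j ∈ Finset.range m, f (m + j) := Finset.card_nsmul_le_sum _ _ _ hterm
    _ ≤ seriesTail f m :=
        (hf.comp_injective (add_right_injective m)).sum_le_tsum _ fun j _ => hnonneg j

section Normed

variable {E : Type*} [NormedAddCommGroup E] {f : ℕ → E}

lemma summable_norm_of_summable_natCast_mul_norm (hf : Summable fun n : ℕ => (n : ℝ) * ‖f n‖) :
    Summable fun n => ‖f n‖ := by
  refine hf.of_norm_bounded_eventually_nat ?_
  filter_upwards [eventually_ge_atTop 1] with n hn
  rw [norm_norm]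
  exact le_mul_of_one_le_left (norm_nonneg _) (by exact_mod_cast hn)

lemma natCast_mul_norm_seriesTail_le (hf : Summable fun n : ℕ => (n : ℝ) * ‖f n‖) (k : ℕ) :
    (k : ℝ) * ‖seriesTail f k‖ ≤ ∑' n : ℕ, (n : ℝ) * ‖f n‖ := by
  have hk : Summable fun n => ‖f (k + n)‖ :=
    (summable_norm_of_summable_natCast_mul_norm hf).comp_injective (add_right_injective k)
  calc (k : ℝ) * ‖seriesTail f k‖
      ≤ k * ∑' n, ‖f (k + n)‖ := by gcongr; exact norm_tsum_le_tsum_norm hk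
    _ = ∑' n, (k : ℝ) * ‖f (k + n)‖ := tsum_mul_left.symm
    _ ≤ ∑' n, ((k + n : ℕ) : ℝ) * ‖f (k + n)‖ :=
        (hk.mul_left _).tsum_le_tsum (fun n => by gcongr; exact Nat.le_add_right k n)
          (hf.comp_injective (add_right_injective k))
    _ ≤ ∑' n : ℕ, (n : ℝ) * ‖f n‖ :=
        tsum_comp_le_tsum_of_inj hf (fun n => by positivity) (add_right_injective k)

/-- The antidiagonal `p.1 + p.2 = n` contributes `n + 1` copies of `f n`. -/
lemma summable_comp_fst_add_snd [CompleteSpace E] (hf : Summable fun n : ℕ => (n : ℝ) * ‖f n‖) :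
    Summable fun p : ℕ × ℕ => f (p.1 + p.2) := by
  refine Summable.of_norm ?_
  rw [← Finset.HasAntidiagonal.sigmaAntidiagonalEquivProd.summable_iff]
  refine (summable_sigma_of_nonneg fun _ => norm_nonneg _).2 ⟨fun n => (hasSum_fintype _).summable,
    (hf.add (summable_norm_of_summable_natCast_mul_norm hf)).congr fun n => ?_⟩
  have hconst : ∀ p : Finset.HasAntidiagonal.antidiagonal n, ‖f (p.1.1 + p.1.2)‖ = ‖f n‖ :=
    fun p => by rw [Finset.HasAntidiagonal.mem_antidiagonal.1 p.2]
  refine Eq.symm ((tsum_congr hconst).trans ?_)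
  simp only [tsum_fintype, Finset.sum_const, Finset.card_univ, Fintype.card_coe,
    Finset.Nat.card_antidiagonal, nsmul_eq_mul]
  push_cast
  ring

lemma summable_seriesTail [CompleteSpace E] (hf : Summable fun n : ℕ => (n : ℝ) * ‖f n‖) :
    Summable (seriesTail f) :=
  (summable_comp_fst_add_snd hf).prod

end Normed

lemma div_le_seriesTail_seriesTail {f : ℕ → ℝ} (hf : Summable fun n : ℕ => (n : ℝ) * ‖f n‖)
    {c : ℝ} (hc : 0 ≤ c) {m : ℕ} (hm : 0 < m) (h : ∀ n, m ≤ n → c / (n : ℝ) ^ 3 ≤ f n) :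
    c / 32 / m ≤ seriesTail (seriesTail f) m := by
  have htail : ∀ n, m ≤ n → c / 8 / (n : ℝ) ^ 2 ≤ seriesTail f n := fun n hn =>
    calc c / 8 / (n : ℝ) ^ 2 = c / 2 ^ (2 + 1) / (n : ℝ) ^ 2 := by norm_num
      _ ≤ seriesTail f n :=
          div_pow_le_seriesTail (summable_norm_of_summable_natCast_mul_norm hf).of_norm hc
            (hm.trans_le hn) fun i hi => h i (hn.trans hi)
  calc c / 32 / m = c / 8 / 2 ^ (1 + 1) / (m : ℝ) ^ 1 := by ring
    _ ≤ seriesTail (seriesTail f) m :=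
        div_pow_le_seriesTail (summable_seriesTail hf) (by positivity) hm htail

lemma exists_seriesTail_le_mul_seriesTail_seriesTail {f : ℕ → ℝ}
    (hf : Summable fun n : ℕ => (n : ℝ) * ‖f n‖) {c : ℝ} (hc : 0 < c)
    (h : ∀ n : ℕ, 0 < n → c / (n : ℝ) ^ 3 ≤ f n) :
    ∃ C : ℝ, 0 < C ∧ ∀ k m : ℕ, 0 < m → m ≤ 2 * k →
      seriesTail f k ≤ C * seriesTail (seriesTail f) m := by
  set A : ℝ := ∑' n : ℕ, (n : ℝ) * ‖f n‖
  have hA : 0 ≤ A := tsum_nonneg fun n => by positivity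
  refine ⟨64 * (A + 1) / c, by positivity, fun k m hm hmk => ?_⟩
  have hk' : (0 : ℝ) < k := by exact_mod_cast (by lia : 0 < k)
  have : (0 : ℝ) < m := by exact_mod_cast hm
  have hmk' : (m : ℝ) ≤ 2 * k := by exact_mod_cast hmk
  have hupper : k * seriesTail f k ≤ A :=
    (mul_le_mul_of_nonneg_left (Real.le_norm_self _) hk'.le).trans
      (natCast_mul_norm_seriesTail_le hf k)
  calc seriesTail f k
      ≤ A / k := (le_div_iff₀' hk').2 hupper
    _ ≤ (A + 1) / (m / 2) := by gcongr <;> linarith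
    _ = 64 * (A + 1) / c * (c / 32 / m) := by field_simp; norm_num
    _ ≤ 64 * (A + 1) / c * seriesTail (seriesTail f) m := by
        gcongr
        exact div_le_seriesTail_seriesTail hf hc.le hm fun n hn => h n (hm.trans_le hn)

end SeriesTail

lemma lt_two_pow_two_pow (j : ℕ) : j < 2 ^ 2 ^ j :=
  Nat.lt_two_pow_self.trans Nat.lt_two_pow_self

lemma two_pow_two_pow_injective : Function.Injective fun j : ℕ => 2 ^ 2 ^ j :=
  (Nat.pow_right_injective le_rfl).comp (Nat.pow_right_injective le_rfl)

lemma even_two_pow_two_pow (j : ℕ) : Even (2 ^ 2 ^ j) :=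
  even_two.pow_of_ne_zero (by positivity)

lemma phiW_two_pow_two_pow (j : ℕ) :
    phiW (2 ^ 2 ^ j) = (j : ℝ) / ((2 : ℝ) ^ 2 ^ j) ^ 2 + 1 / ((2 : ℝ) ^ 2 ^ j) ^ 3 := by
  have hlog : Real.logb 2 (Real.logb 2 ((2 : ℝ) ^ 2 ^ j)) = j := by
    simp [Real.logb_pow]
  rw [phiW, if_pos ⟨j, rfl⟩]
  push_cast
  rw [hlog]

lemma phiW_of_forall_ne {n : ℕ} (h : ∀ j : ℕ, n ≠ 2 ^ 2 ^ j) : phiW n = 1 / (n : ℝ) ^ 3 :=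
  if_neg (not_exists.2 h)

lemma phiW_of_odd {n : ℕ} (h : Odd n) : phiW n = 1 / (n : ℝ) ^ 3 :=
  phiW_of_forall_ne fun j hj => Nat.not_even_iff_odd.2 h (hj ▸ even_two_pow_two_pow j)

lemma one_div_cube_le_phiW (n : ℕ) : 1 / (n : ℝ) ^ 3 ≤ phiW n := by
  by_cases h : ∃ j : ℕ, n = 2 ^ 2 ^ j
  · obtain ⟨j, rfl⟩ := h
    rw [phiW_two_pow_two_pow]
    push_cast
    exact le_add_of_nonneg_left (by positivity)
  · exact (phiW_of_forall_ne (not_exists.1 h)).ge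

lemma phiW_nonneg (n : ℕ) : 0 ≤ phiW n :=
  le_trans (by positivity) (one_div_cube_le_phiW n)

lemma phiW_pos {n : ℕ} (hn : 0 < n) : 0 < phiW n :=
  lt_of_lt_of_le (by positivity) (one_div_cube_le_phiW n)

lemma phiW_two_pow_two_pow_lt_half (j : ℕ) : phiW (2 ^ 2 ^ j) < 1 / 2 := by
  have hj : (j : ℝ) + 1 ≤ (2 : ℝ) ^ 2 ^ j := by exact_mod_cast lt_two_pow_two_pow j
  have htwo : (2 : ℝ) ≤ (2 : ℝ) ^ 2 ^ j := le_self_pow₀ one_le_two (by positivity)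
  rw [phiW_two_pow_two_pow]
  generalize (2 : ℝ) ^ 2 ^ j = N at *
  have : 0 < N := two_pos.trans_le htwo
  have hcubic : 2 * (j * N + 1) < N ^ 3 := by
    calc 2 * (j * N + 1) ≤ 2 * ((N - 1) * N + 1) := by gcongr; linarith
      _ < N ^ 3 := by nlinarith [mul_nonneg (sq_nonneg N) (sub_nonneg.2 htwo)]
  calc (j : ℝ) / N ^ 2 + 1 / N ^ 3 = (j * N + 1) / N ^ 3 := by field_simp
    _ < 1 / 2 := by
      rw [div_lt_div_iff₀ (by positivity) two_pos]
      linarith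

lemma phiW_lt_half {n : ℕ} (hn : 2 ≤ n) : phiW n < 1 / 2 := by
  by_cases h : ∃ j : ℕ, n = 2 ^ 2 ^ j
  · obtain ⟨j, rfl⟩ := h
    exact phiW_two_pow_two_pow_lt_half j
  · have hn' : (2 : ℝ) ≤ n := by exact_mod_cast hn
    calc phiW n = 1 / (n : ℝ) ^ 3 := phiW_of_forall_ne (not_exists.1 h)
      _ ≤ 1 / 2 ^ 3 := by gcongr
      _ < 1 / 2 := by norm_num

lemma summable_div_two_pow_two_pow : Summable fun j : ℕ => (j : ℝ) / (2 : ℝ) ^ 2 ^ j := by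
  have hgeom : Summable fun j : ℕ => (j : ℝ) ^ 1 * (1 / 2 : ℝ) ^ j :=
    summable_pow_mul_geometric_of_norm_lt_one 1 (by norm_num)
  refine hgeom.of_nonneg_of_le (fun j => by positivity) fun j => ?_
  calc (j : ℝ) / (2 : ℝ) ^ 2 ^ j ≤ j / 2 ^ j := by
        gcongr
        · exact one_le_two
        · exact Nat.lt_two_pow_self.le
    _ = (j : ℝ) ^ 1 * (1 / 2 : ℝ) ^ j := by rw [pow_one, one_div_pow, mul_one_div]

lemma summable_natCast_mul_phiW_sub_one_div_cube :
    Summable fun n : ℕ => (n : ℝ) * (phiW n - 1 / (n : ℝ) ^ 3) := by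
  refine (two_pow_two_pow_injective.summable_iff fun n hn => ?_).1
    (summable_div_two_pow_two_pow.congr fun j => ?_)
  · rw [phiW_of_forall_ne fun j hj => hn ⟨j, hj.symm⟩, sub_self, mul_zero]
  · simp only [Function.comp_apply, phiW_two_pow_two_pow]
    push_cast
    field_simp
    ring

lemma summable_natCast_mul_norm_phiW : Summable fun n : ℕ => (n : ℝ) * ‖phiW n‖ := by
  have hsq : Summable fun n : ℕ => 1 / (n : ℝ) ^ 2 :=
    Real.summable_one_div_nat_pow.2 one_lt_two
  refine (hsq.add summable_natCast_mul_phiW_sub_one_div_cube).congr fun n => ?_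
  rw [Real.norm_of_nonneg (phiW_nonneg n)]
  rcases n.eq_zero_or_pos with rfl | hn
  · simp
  · field_simp
    ring

lemma summable_phiW : Summable phiW :=
  (summable_norm_of_summable_natCast_mul_norm summable_natCast_mul_norm_phiW).of_norm

lemma exists_seriesTail_phiW_le : ∃ C : ℝ, 0 < C ∧ ∀ k m : ℕ, 0 < m → m ≤ 2 * k →
    seriesTail phiW k ≤ C * seriesTail (seriesTail phiW) m :=
  exists_seriesTail_le_mul_seriesTail_seriesTail summable_natCast_mul_norm_phiW one_pos
    fun n _ => one_div_cube_le_phiW n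

lemma div_four_le_seriesTail_phiW_div_phiW {j n : ℕ} (hn : n + 1 = 2 ^ 2 ^ j) :
    (j : ℝ) / 4 ≤ seriesTail phiW (n + 1) / phiW n := by
  have hodd : Odd n := by
    have := even_two_pow_two_pow j
    rwa [← hn, Nat.even_add_one, Nat.not_even_iff_odd] at this
  have hone : (1 : ℝ) ≤ n := by exact_mod_cast hodd.pos
  have hcast : (2 : ℝ) ^ 2 ^ j = (n : ℝ) + 1 := by exact_mod_cast hn.symm
  have hsq : ((n : ℝ) + 1) ^ 2 ≤ 4 * (n : ℝ) ^ 3 := by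
    calc ((n : ℝ) + 1) ^ 2 ≤ (2 * n) ^ 2 := by gcongr; linarith
      _ = 4 * (n : ℝ) ^ 2 := by ring
      _ ≤ 4 * (n : ℝ) ^ 3 := by gcongr; lia
  rw [phiW_of_odd hodd, le_div_iff₀ (by positivity)]
  calc (j : ℝ) / 4 * (1 / (n : ℝ) ^ 3) = j / (4 * (n : ℝ) ^ 3) := by
        rw [div_mul_div_comm, mul_one]
    _ ≤ j / ((n : ℝ) + 1) ^ 2 := by gcongr
    _ ≤ phiW (n + 1) := by
        rw [hn, phiW_two_pow_two_pow, hcast]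
        exact le_add_of_nonneg_right (by positivity)
    _ ≤ seriesTail phiW (n + 1) := le_seriesTail summable_phiW phiW_nonneg _

lemma frequently_lt_seriesTail_phiW_div_phiW (M : ℝ) :
    ∃ᶠ n in atTop, M < seriesTail phiW (n + 1) / phiW n := by
  have htendsto : Tendsto (fun j : ℕ => 2 ^ 2 ^ j - 1) atTop atTop :=
    tendsto_atTop_mono (fun j => Nat.le_sub_one_of_lt (lt_two_pow_two_pow j)) tendsto_id
  refine htendsto.frequently (Eventually.frequently ?_)
  filter_upwards [tendsto_natCast_atTop_atTop.eventually_gt_atTop (4 * M)] with j hj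
  calc M < (j : ℝ) / 4 := by linarith
    _ ≤ _ := div_four_le_seriesTail_phiW_div_phiW (Nat.sub_add_cancel Nat.one_le_two_pow)

/-- properties (a)–(d) of the sequence `φ`. -/
theorem statement19 :
    ((∀ n : ℕ, 2 ≤ n → 0 < phiW n ∧ phiW n < 1 / 2) ∧ Summable phiW) ∧
    (∀ M : ℝ, ∃ᶠ n in Filter.atTop, M < (∑' k : ℕ, phiW (n + 1 + k)) / phiW n) ∧
    (∃ c : ℝ, 0 < c ∧ ∀ k : ℕ, 4 ≤ k →
      (∑' n : ℕ, phiW (k + n)) ≤ c * ∑' n : ℕ, ∑' j : ℕ, phiW (k + n + 1 + j)) ∧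
    (∃ c' : ℝ, 0 < c' ∧ ∀ k : ℕ, 4 ≤ k →
      phiW k ≤ c' * ∑' n : ℕ, ∑' j : ℕ, phiW (k + 1 + n + 1 + j)) := by
  have hdouble : ∀ k : ℕ,
      ∑' n : ℕ, ∑' j : ℕ, phiW (k + n + 1 + j) = seriesTail (seriesTail phiW) (k + 1) :=
    fun k => tsum_congr fun n => congrArg (seriesTail phiW) (Nat.add_right_comm k n 1)
  obtain ⟨C, hC, htail⟩ := exists_seriesTail_phiW_le
  refine ⟨⟨fun n hn => ⟨phiW_pos (by lia), phiW_lt_half hn⟩, summable_phiW⟩,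
    frequently_lt_seriesTail_phiW_div_phiW, ⟨C, hC, fun k hk => ?_⟩, ⟨C, hC, fun k hk => ?_⟩⟩
  · rw [hdouble]
    exact htail k (k + 1) k.succ_pos (by lia)
  · rw [hdouble]
    exact (le_seriesTail summable_phiW phiW_nonneg k).trans
      (htail k (k + 1 + 1) (k + 1).succ_pos (by lia))
end
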